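/- Every type A of Λ× reduces by the type reductions to a unique product normal form A^π, and A^π is either of the form ×_{i=1}^n A_i with every A_i a type of Λ (containing neither × nor T), or A^π is T. -/

import Mathlib

set_option autoImplicit false

/-- Types of the typed lambda calculus Λ× : generated from atomic types (`ν`) and the
constant atomic type `T` by `→` and `×`. -/
inductive Tyx (ν : Type) : Type
  | atom : ν → Tyx ν
  | unit : Tyx ν
  | arrow : Tyx ν → Tyx ν → Tyx ν
  | prod : Tyx ν → Tyx ν → Tyx ν

/-- A typing context. -/
abbrev Ctxx (ν : Type) : Type := List (Tyx ν)

/-- Typed de Bruijn variables. -/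
inductive Varx {ν : Type} : Ctxx ν → Tyx ν → Type
  | vz {Γ : Ctxx ν} {A : Tyx ν} : Varx (A :: Γ) A
  | vs {Γ : Ctxx ν} {A B : Tyx ν} : Varx Γ A → Varx (B :: Γ) A

/-- Typed terms of Λ×. -/
inductive Tmx {ν : Type} : Ctxx ν → Tyx ν → Type
  | var {Γ : Ctxx ν} {A : Tyx ν} : Varx Γ A → Tmx Γ A
  | app {Γ : Ctxx ν} {A B : Tyx ν} : Tmx Γ (Tyx.arrow A B) → Tmx Γ A → Tmx Γ B
  | lam {Γ : Ctxx ν} {A B : Tyx ν} : Tmx (A :: Γ) B → Tmx Γ (Tyx.arrow A B)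
  | pair {Γ : Ctxx ν} {A B : Tyx ν} : Tmx Γ A → Tmx Γ B → Tmx Γ (Tyx.prod A B)
  | p1 {Γ : Ctxx ν} {A B : Tyx ν} : Tmx Γ (Tyx.prod A B) → Tmx Γ A
  | p2 {Γ : Ctxx ν} {A B : Tyx ν} : Tmx Γ (Tyx.prod A B) → Tmx Γ B
  | k {Γ : Ctxx ν} : Tmx Γ Tyx.unit

/-- Renamings between contexts. -/
def Renx {ν : Type} (Γ Δ : Ctxx ν) : Type := ∀ A : Tyx ν, Varx Γ A → Varx Δ A

def Renx.ext {ν : Type} {Γ Δ : Ctxx ν} (ρ : Renx Γ Δ) (A : Tyx ν) :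
    ∀ B : Tyx ν, Varx (A :: Γ) B → Varx (A :: Δ) B
  | _, .vz => .vz
  | _, .vs w => .vs (ρ _ w)

def Tmx.rename {ν : Type} : ∀ {Γ Δ : Ctxx ν} {A : Tyx ν}, Renx Γ Δ → Tmx Γ A → Tmx Δ A
  | _, _, _, ρ, .var v => .var (ρ _ v)
  | _, _, _, ρ, .app f a => .app (f.rename ρ) (a.rename ρ)
  | _, _, _, ρ, .lam b => .lam (b.rename (Renx.ext ρ _))
  | _, _, _, ρ, .pair a b => .pair (a.rename ρ) (b.rename ρ)
  | _, _, _, ρ, .p1 a => .p1 (a.rename ρ)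
  | _, _, _, ρ, .p2 a => .p2 (a.rename ρ)
  | _, _, _, _, .k => .k

/-- Simultaneous substitutions. -/
def Substx {ν : Type} (Γ Δ : Ctxx ν) : Type := ∀ A : Tyx ν, Varx Γ A → Tmx Δ A

def Substx.ext {ν : Type} {Γ Δ : Ctxx ν} (σ : Substx Γ Δ) (A : Tyx ν) :
    ∀ B : Tyx ν, Varx (A :: Γ) B → Tmx (A :: Δ) B
  | _, .vz => .var .vz
  | _, .vs w => (σ _ w).rename (fun _ => Varx.vs)

def Tmx.subst {ν : Type} : ∀ {Γ Δ : Ctxx ν} {A : Tyx ν}, Substx Γ Δ → Tmx Γ A → Tmx Δ A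
  | _, _, _, σ, .var v => σ _ v
  | _, _, _, σ, .app f a => .app (f.subst σ) (a.subst σ)
  | _, _, _, σ, .lam b => .lam (b.subst (Substx.ext σ _))
  | _, _, _, σ, .pair a b => .pair (a.subst σ) (b.subst σ)
  | _, _, _, σ, .p1 a => .p1 (a.subst σ)
  | _, _, _, σ, .p2 a => .p2 (a.subst σ)
  | _, _, _, _, .k => .k

def Substx.cons {ν : Type} {Γ Δ : Ctxx ν} {A : Tyx ν} (b : Tmx Δ A) (σ : Substx Γ Δ) :
    ∀ B : Tyx ν, Varx (A :: Γ) B → Tmx Δ B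
  | _, .vz => b
  | _, .vs w => σ _ w

/-- Substitution of a single term for the last variable: `a[b/x]`. -/
def Tmx.subst1 {ν : Type} {Γ : Ctxx ν} {A B : Tyx ν} (a : Tmx (A :: Γ) B) (b : Tmx Γ A) :
    Tmx Γ B :=
  a.subst (Substx.cons b (fun _ v => .var v))

/-- The theory Λ× of βη-equality with surjective pairing and terminal type `T`. -/
inductive Eqvx {ν : Type} : ∀ {Γ : Ctxx ν} {A : Tyx ν}, Tmx Γ A → Tmx Γ A → Prop
  | refl {Γ : Ctxx ν} {A : Tyx ν} (a : Tmx Γ A) : Eqvx a a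
  | symm {Γ : Ctxx ν} {A : Tyx ν} {a b : Tmx Γ A} : Eqvx a b → Eqvx b a
  | trans {Γ : Ctxx ν} {A : Tyx ν} {a b c : Tmx Γ A} : Eqvx a b → Eqvx b c → Eqvx a c
  | congApp {Γ : Ctxx ν} {A B : Tyx ν} {f g : Tmx Γ (Tyx.arrow A B)} {a b : Tmx Γ A} :
      Eqvx f g → Eqvx a b → Eqvx (.app f a) (.app g b)
  | congLam {Γ : Ctxx ν} {A B : Tyx ν} {a b : Tmx (A :: Γ) B} :
      Eqvx a b → Eqvx (.lam a) (.lam b)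
  | congPair {Γ : Ctxx ν} {A B : Tyx ν} {a a' : Tmx Γ A} {b b' : Tmx Γ B} :
      Eqvx a a' → Eqvx b b' → Eqvx (.pair a b) (.pair a' b')
  | congP1 {Γ : Ctxx ν} {A B : Tyx ν} {a b : Tmx Γ (Tyx.prod A B)} :
      Eqvx a b → Eqvx (.p1 a) (.p1 b)
  | congP2 {Γ : Ctxx ν} {A B : Tyx ν} {a b : Tmx Γ (Tyx.prod A B)} :
      Eqvx a b → Eqvx (.p2 a) (.p2 b)
  | beta {Γ : Ctxx ν} {A B : Tyx ν} (a : Tmx (A :: Γ) B) (b : Tmx Γ A) :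
      Eqvx (.app (.lam a) b) (a.subst1 b)
  | eta {Γ : Ctxx ν} {A B : Tyx ν} (a : Tmx Γ (Tyx.arrow A B)) :
      Eqvx (.lam (.app (a.rename (fun _ => Varx.vs)) (.var .vz))) a
  | prodBeta1 {Γ : Ctxx ν} {A B : Tyx ν} (a : Tmx Γ A) (b : Tmx Γ B) :
      Eqvx (.p1 (.pair a b)) a
  | prodBeta2 {Γ : Ctxx ν} {A B : Tyx ν} (a : Tmx Γ A) (b : Tmx Γ B) :
      Eqvx (.p2 (.pair a b)) b
  | prodEta {Γ : Ctxx ν} {A B : Tyx ν} (c : Tmx Γ (Tyx.prod A B)) :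
      Eqvx (.pair (.p1 c) (.p2 c)) c
  | unit {Γ : Ctxx ν} (a : Tmx Γ Tyx.unit) : Eqvx a .k

def Varx.elim0 {ν : Type} {A : Tyx ν} {C : Sort*} : Varx ([] : Ctxx ν) A → C :=
  fun v => nomatch v

/-- Weakening of a closed term into an arbitrary context. -/
def Tmx.wk {ν : Type} {Δ : Ctxx ν} {A : Tyx ν} (t : Tmx ([] : Ctxx ν) A) : Tmx Δ A :=
  t.rename (fun _ v => v.elim0)

/-- One-step reduction of types of Λ× (replacement of a redex subtype by its
contractum). -/
inductive TyStep {ν : Type} : Tyx ν → Tyx ν → Prop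
  | arrProd (A B₁ B₂ : Tyx ν) :
      TyStep (.arrow A (.prod B₁ B₂)) (.prod (.arrow A B₁) (.arrow A B₂))
  | prodArr (A₁ A₂ B : Tyx ν) :
      TyStep (.arrow (.prod A₁ A₂) B) (.arrow A₁ (.arrow A₂ B))
  | prodAssoc (A B C : Tyx ν) :
      TyStep (.prod A (.prod B C)) (.prod (.prod A B) C)
  | arrUnit (A : Tyx ν) : TyStep (.arrow A .unit) .unit
  | unitArr (B : Tyx ν) : TyStep (.arrow .unit B) B
  | prodUnit (A : Tyx ν) : TyStep (.prod A .unit) A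
  | unitProd (A : Tyx ν) : TyStep (.prod .unit A) A
  | arrL {A A' : Tyx ν} (B : Tyx ν) : TyStep A A' → TyStep (.arrow A B) (.arrow A' B)
  | arrR (A : Tyx ν) {B B' : Tyx ν} : TyStep B B' → TyStep (.arrow A B) (.arrow A B')
  | prodL {A A' : Tyx ν} (B : Tyx ν) : TyStep A A' → TyStep (.prod A B) (.prod A' B)
  | prodR (A : Tyx ν) {B B' : Tyx ν} : TyStep B B' → TyStep (.prod A B) (.prod A B')

/-- A type is in product normal form iff none of its subtypes is a redex, i.e. iff no
type reduction applies to it. -/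
def PNF {ν : Type} (A : Tyx ν) : Prop := ∀ B : Tyx ν, ¬ TyStep A B

/-- A type of Λ (no product types and no `T`), among the types of Λ×. -/
def LamTy {ν : Type} : Tyx ν → Prop
  | .atom _ => True
  | .unit => False
  | .arrow A B => LamTy A ∧ LamTy B
  | .prod _ _ => False

/-- `IterProdOfLamTy B` : `B` is of the form `×_{i=1}^n A_i` (left-nested, `n ≥ 1`) with
every `A_i` a type of Λ. -/
inductive IterProdOfLamTy {ν : Type} : Tyx ν → Prop
  | single {A : Tyx ν} : LamTy A → IterProdOfLamTy A
  | cons {A B : Tyx ν} : IterProdOfLamTy A → LamTy B → IterProdOfLamTy (.prod A B)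

/-!
Interpret a type as the list of its Λ-factors: `T` as the empty list, `×` as concatenation, and
`A → B` as the list of the curried types `A₁ → (⋯ → (Aₙ → Bⱼ))`, where `A₁, …, Aₙ` and the `Bⱼ`
are the factors of `A` and `B`. Each type reduction becomes an identity between such lists, so
convertible types have the same factors, while every type reduces to the iterated product of its
factors. A product normal form reduces only to itself, so it is the iterated product of its own
factors and is determined by them; no termination or local confluence argument is needed.
-/

open Relation

namespace Tyx

variable {ν : Type} {A A' B B' : Tyx ν}

theorem arrow_reduces (hA : ReflTransGen TyStep A A') (hB : ReflTransGen TyStep B B') :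
    ReflTransGen TyStep (.arrow A B) (.arrow A' B') :=
  (hA.lift (arrow · B) fun _ _ => .arrL B).trans (hB.lift (arrow A') fun _ _ => .arrR A')

theorem prod_reduces (hA : ReflTransGen TyStep A A') (hB : ReflTransGen TyStep B B') :
    ReflTransGen TyStep (.prod A B) (.prod A' B') :=
  (hA.lift (prod · B) fun _ _ => .prodL B).trans (hB.lift (prod A') fun _ _ => .prodR A')

/-- The left-nested iterated product `×_{i=1}^n A_i` of a list of types, extended to the empty
list by the neutral type `T`. -/
def iterProd : List (Tyx ν) → Tyx ν
  | [] => .unit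
  | A :: l => l.foldl prod A

theorem prod_foldl_reduces (A B : Tyx ν) (l : List (Tyx ν)) :
    ReflTransGen TyStep (.prod A (l.foldl prod B)) (l.foldl prod (.prod A B)) := by
  induction l using List.reverseRecOn with
  | nil => exact .refl
  | append_singleton l C ih =>
    simp only [List.foldl_concat]
    exact .head (.prodAssoc _ _ _) (prod_reduces ih .refl)

theorem prod_iterProd_reduces (l m : List (Tyx ν)) :
    ReflTransGen TyStep (.prod (iterProd l) (iterProd m)) (iterProd (l ++ m)) := by
  match l, m with
  | [], m => exact .single (.unitProd _)
  | A :: l, [] => simpa only [List.append_nil] using .single (.prodUnit _)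
  | A :: l, B :: m =>
    simpa only [iterProd, List.cons_append, List.foldl_append, List.foldl_cons] using
      prod_foldl_reduces (l.foldl prod A) B m

theorem arrow_foldl_reduces {f : Tyx ν → Tyx ν}
    (hf : ∀ B, ReflTransGen TyStep (.arrow A B) (f B)) (B : Tyx ν) (l : List (Tyx ν)) :
    ReflTransGen TyStep (.arrow A (l.foldl prod B)) ((l.map f).foldl prod (f B)) := by
  induction l using List.reverseRecOn with
  | nil => exact hf B
  | append_singleton l C ih =>
    simp only [List.map_append, List.map_cons, List.map_nil, List.foldl_concat]
    exact .head (.arrProd _ _ _) (prod_reduces ih (hf C))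

theorem arrow_iterProd_reduces {f : Tyx ν → Tyx ν}
    (hf : ∀ B, ReflTransGen TyStep (.arrow A B) (f B)) (l : List (Tyx ν)) :
    ReflTransGen TyStep (.arrow A (iterProd l)) (iterProd (l.map f)) :=
  match l with
  | [] => .single (.arrUnit A)
  | B :: l => arrow_foldl_reduces hf B l

theorem foldl_arrow_reduces (A : Tyx ν) (l : List (Tyx ν)) (B : Tyx ν) :
    ReflTransGen TyStep (.arrow (l.foldl prod A) B) (.arrow A (l.foldr arrow B)) := by
  induction l generalizing A with
  | nil => exact .refl
  | cons C l ih => exact (ih (.prod A C)).tail (.prodArr _ _ _)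

theorem iterProd_arrow_reduces (l : List (Tyx ν)) (B : Tyx ν) :
    ReflTransGen TyStep (.arrow (iterProd l) B) (l.foldr arrow B) :=
  match l with
  | [] => .single (.unitArr B)
  | A :: l => foldl_arrow_reduces A l B

/-- The list of Λ-types whose iterated product is the product normal form of a type. -/
def factors : Tyx ν → List (Tyx ν)
  | .atom a => [.atom a]
  | .unit => []
  | .arrow A B => (factors B).map fun C => (factors A).foldr arrow C
  | .prod A B => factors A ++ factors B

/-- The product normal form `A^π`. -/
def normalForm (A : Tyx ν) : Tyx ν :=
  iterProd (factors A)

theorem reduces_normalForm (A : Tyx ν) : ReflTransGen TyStep A (normalForm A) := by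
  induction A with
  | atom a => exact .refl
  | unit => exact .refl
  | arrow A B ihA ihB =>
    exact (arrow_reduces ihA ihB).trans (arrow_iterProd_reduces (iterProd_arrow_reduces _) _)
  | prod A B ihA ihB => exact (prod_reduces ihA ihB).trans (prod_iterProd_reduces _ _)

theorem factors_eq_of_step (h : TyStep A B) : factors A = factors B := by
  induction h with
  | arrProd => exact List.map_append
  | prodArr => simp only [factors, List.foldr_append, List.map_map, Function.comp_def]
  | prodAssoc => exact (List.append_assoc _ _ _).symm
  | arrUnit => rfl
  | unitArr => exact List.map_id _
  | prodUnit => exact List.append_nil _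
  | unitProd => rfl
  | arrL _ _ ih | arrR _ _ ih | prodL _ _ ih | prodR _ _ ih => simp only [factors, ih]

theorem normalForm_eq_of_reduces (h : ReflTransGen TyStep A B) : normalForm A = normalForm B := by
  induction h with
  | refl => rfl
  | tail _ hstep ih => rw [ih, normalForm, factors_eq_of_step hstep, normalForm]

theorem lamTy_foldr_arrow {l : List (Tyx ν)} (hl : ∀ A ∈ l, LamTy A) (hB : LamTy B) :
    LamTy (l.foldr arrow B) := by
  induction l with
  | nil => exact hB
  | cons A l ih =>
    rw [List.forall_mem_cons] at hl
    exact ⟨hl.1, ih hl.2⟩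

theorem forall_mem_factors_lamTy (A : Tyx ν) : ∀ C ∈ factors A, LamTy C := by
  induction A with
  | atom a => exact List.forall_mem_singleton.2 trivial
  | unit => exact List.forall_mem_nil _
  | arrow A B ihA ihB =>
    exact List.forall_mem_map.2 fun C hC => lamTy_foldr_arrow ihA (ihB C hC)
  | prod A B ihA ihB => exact List.forall_mem_append.2 ⟨ihA, ihB⟩

theorem iterProdOfLamTy_foldl {l : List (Tyx ν)} (hA : IterProdOfLamTy A)
    (hl : ∀ C ∈ l, LamTy C) : IterProdOfLamTy (l.foldl prod A) := by
  induction l generalizing A with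
  | nil => exact hA
  | cons C l ih =>
    rw [List.forall_mem_cons] at hl
    exact ih (.cons hA hl.1) hl.2

theorem iterProdOfLamTy_iterProd_or_eq_unit {l : List (Tyx ν)} (hl : ∀ C ∈ l, LamTy C) :
    IterProdOfLamTy (iterProd l) ∨ iterProd l = .unit := by
  cases l with
  | nil => exact .inr rfl
  | cons A l =>
    rw [List.forall_mem_cons] at hl
    exact .inl (iterProdOfLamTy_foldl (.single hl.1) hl.2)

theorem iterProdOfLamTy_normalForm_or_eq_unit (A : Tyx ν) :
    IterProdOfLamTy (normalForm A) ∨ normalForm A = .unit :=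
  iterProdOfLamTy_iterProd_or_eq_unit (forall_mem_factors_lamTy A)

theorem not_lamTy_of_step (h : TyStep A B) : ¬ LamTy A := by
  induction h with
  | arrProd | arrUnit => exact And.right
  | prodArr | unitArr => exact And.left
  | prodAssoc | prodUnit | unitProd | prodL | prodR => exact id
  | arrL _ _ ih => exact fun hA => ih hA.1
  | arrR _ _ ih => exact fun hA => ih hA.2

theorem pnf_unit : PNF (.unit : Tyx ν) :=
  nofun

theorem pnf_of_iterProdOfLamTy (hA : IterProdOfLamTy A) : PNF A := by
  induction hA with
  | single hA => exact fun _ hstep => not_lamTy_of_step hstep hA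
  | cons hA hB ih =>
    intro _ hstep
    cases hstep with
    | prodAssoc | prodUnit => exact hB
    | unitProd => cases hA with | single hA => exact hA
    | prodL _ hstep => exact ih _ hstep
    | prodR _ hstep => exact not_lamTy_of_step hstep hB

theorem pnf_normalForm (A : Tyx ν) : PNF (normalForm A) := by
  obtain hA | hA := iterProdOfLamTy_normalForm_or_eq_unit A
  · exact pnf_of_iterProdOfLamTy hA
  · exact hA ▸ pnf_unit

theorem normalForm_eq_self_of_pnf (hA : PNF A) : normalForm A = A :=
  (reflTransGen_iff_eq hA).1 (reduces_normalForm A)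

theorem eq_normalForm_of_reduces_of_pnf (h : ReflTransGen TyStep A B) (hB : PNF B) :
    B = normalForm A :=
  (normalForm_eq_self_of_pnf hB).symm.trans (normalForm_eq_of_reduces h).symm

end Tyx

/--
Every type `A` of Λ× reduces by the type reductions to a unique product normal form
`A^π`, and `A^π` is either of the form `×_{i=1}^n A_i` with every `A_i` a type of Λ, or
`A^π` is `T`.
-/
theorem product_normal_form_exists_unique {ν : Type} (A : Tyx ν) :
    ∃ B : Tyx ν,
      (Relation.ReflTransGen TyStep A B ∧ PNF B) ∧
      (∀ B' : Tyx ν, Relation.ReflTransGen TyStep A B' → PNF B' → B' = B) ∧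
      (IterProdOfLamTy B ∨ B = Tyx.unit) :=
  ⟨A.normalForm, ⟨A.reduces_normalForm, A.pnf_normalForm⟩,
    fun _ => Tyx.eq_normalForm_of_reduces_of_pnf, A.iterProdOfLamTy_normalForm_or_eq_unit⟩
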